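/- Suppose ℓ, m ∈ ℕ with ℓ + m even, ν ∈ ℂ with Re ν > 0, and −1 ≤ x ≤ 1. Then ∫_{−∞}^∞ ∫_{−∞}^∞ |s − xt|^{2ν} e^{−s²−t²} H_ℓ(s) H_m(t) ds dt = (−ν)_{(ℓ+m)/2} · (−1)^{(ℓ−m)/2} · 2^{ℓ+m} · π^{1/2} · Γ(1/2 + ν) · (x² + 1)^{ν − (ℓ+m)/2} · x^m. -/

import Mathlib

open MeasureTheory

/-- The physicists' Hermite polynomial `H_n(x)`, via its explicit expansion
`H_n(x) = n! Σ_{k≤n/2} (-1)^k (2x)^{n-2k} / (k! (n-2k)!)`. -/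
noncomputable def physHermite (n : ℕ) (x : ℝ) : ℝ :=
  ∑ k ∈ Finset.range (n / 2 + 1),
    (-1 : ℝ) ^ k * (Nat.factorial n : ℝ) /
      ((Nat.factorial k : ℝ) * (Nat.factorial (n - 2 * k) : ℝ)) * (2 * x) ^ (n - 2 * k)

open Polynomial in
/-- Hermite polynomials by the three-term recurrence. -/
noncomputable def HP : ℕ → Polynomial ℝ
  | 0 => 1
  | 1 => 2 * X
  | (n + 2) => 2 * X * HP (n + 1) - 2 * ((n : Polynomial ℝ) + 1) * HP n

open Polynomial in
lemma HP_succ (n : ℕ) : HP (n + 1) = 2 * X * HP n - 2 * (n : Polynomial ℝ) * HP (n - 1) := by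
  cases n with
  | zero => simp [HP]
  | succ k => rw [HP]; simp

open Polynomial in
lemma HP_deriv (n : ℕ) : derivative (HP n) = 2 * (n : Polynomial ℝ) * HP (n - 1) := by
  induction n using Nat.strong_induction_on with
  | _ n ih =>
    match n with
    | 0 => simp [HP]
    | 1 => simp [HP]
    | (k + 2) =>
      have h1 := ih (k + 1) (by omega)
      have h0 := ih k (by omega)
      have h2 := HP_succ k
      simp only [Nat.add_sub_cancel] at h1
      rw [HP]
      simp only [derivative_sub, derivative_mul, derivative_add, derivative_natCast,
        derivative_X, derivative_one, derivative_ofNat, h1, h0]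
      rw [show k + 2 - 1 = k + 1 by omega, h2]
      push_cast
      ring

noncomputable def hterm (x : ℝ) (n k : ℕ) : ℝ :=
  if 2 * k ≤ n then (-1 : ℝ) ^ k * (Nat.factorial n : ℝ) /
      ((Nat.factorial k : ℝ) * (Nat.factorial (n - 2 * k) : ℝ)) * (2 * x) ^ (n - 2 * k) else 0

lemma physHermite_eq_sum (n N : ℕ) (h : n / 2 + 1 ≤ N) (x : ℝ) :
    physHermite n x = ∑ k ∈ Finset.range N, hterm x n k := by
  unfold physHermite
  rw [← Finset.sum_subset (Finset.range_subset_range.mpr h)]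
  · apply Finset.sum_congr rfl
    intro k hk
    rw [Finset.mem_range] at hk
    rw [hterm, if_pos (by omega)]
  · intro k _ hk
    rw [Finset.mem_range] at hk
    rw [hterm, if_neg (by omega)]

lemma hterm_zero (x : ℝ) (n : ℕ) : hterm x (n + 1) 0 = 2 * x * hterm x n 0 := by
  have h : (Nat.factorial n : ℝ) ≠ 0 := by exact_mod_cast Nat.factorial_ne_zero _
  have h : (Nat.factorial (n+1) : ℝ) ≠ 0 := by exact_mod_cast Nat.factorial_ne_zero _
  simp [hterm]
  field_simp
  ring

lemma hterm_succ (x : ℝ) (n k : ℕ) : hterm x (n + 2) (k + 1) =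
    2 * x * hterm x (n + 1) (k + 1) - 2 * ((n : ℝ) + 1) * hterm x n k := by
  unfold hterm
  by_cases h : 2 * k ≤ n
  · obtain ⟨j, rfl⟩ := Nat.exists_eq_add_of_le h
    rw [if_pos (by omega), if_pos h, show 2 * k + j + 2 - 2 * (k + 1) = j by omega,
      show 2 * k + j - 2 * k = j by omega]
    rcases j with _ | j
    · rw [if_neg (by omega)]
      simp only [Nat.add_zero, Nat.factorial_succ]
      have h : (Nat.factorial k : ℝ) ≠ 0 := by exact_mod_cast Nat.factorial_ne_zero _
      push_cast
      field_simp
      ring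
    · rw [if_pos (by omega), show 2 * k + (j+1) + 1 - 2 * (k + 1) = j by omega]
      have h : (Nat.factorial k : ℝ) ≠ 0 := by exact_mod_cast Nat.factorial_ne_zero _
      have h : (Nat.factorial j : ℝ) ≠ 0 := by exact_mod_cast Nat.factorial_ne_zero _
      rw [Nat.factorial_succ (2 * k + (j + 1) + 1), Nat.factorial_succ (2 * k + (j + 1)),
        Nat.factorial_succ k, Nat.factorial_succ j]
      push_cast
      field_simp
      ring
  · rw [if_neg (by omega), if_neg (by omega), if_neg h]; simp

lemma physHermite_eq (n : ℕ) (x : ℝ) : physHermite n x = (HP n).eval x := by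
  induction n using Nat.strong_induction_on with
  | _ n ih =>
    match n with
    | 0 => simp [HP, physHermite]
    | 1 => simp [HP, physHermite]
    | (k + 2) =>
      rw [HP]
      simp only [Polynomial.eval_sub, Polynomial.eval_mul, Polynomial.eval_add,
        Polynomial.eval_natCast, Polynomial.eval_X, Polynomial.eval_one, Polynomial.eval_ofNat]
      rw [← ih (k + 1) (by omega), ← ih k (by omega),
        physHermite_eq_sum (k + 2) (k + 3) (by omega),
        physHermite_eq_sum (k + 1) (k + 3) (by omega),
        physHermite_eq_sum k (k + 2) (by omega), Finset.sum_range_succ',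
        Finset.sum_range_succ' _ (k + 2), hterm_zero, mul_add, Finset.mul_sum, Finset.mul_sum]
      simp_rw [hterm_succ]
      rw [Finset.sum_sub_distrib]
      ring

lemma int_pow_gauss (k : ℕ) : Integrable fun v : ℝ => v ^ k * Real.exp (-v ^ 2) := by
  have := integrable_rpow_mul_exp_neg_mul_sq (b := 1) one_pos (s := k)
    (by have : (0 : ℝ) ≤ k := Nat.cast_nonneg k
        linarith)
  simpa using this

lemma int_poly_gauss (p : Polynomial ℝ) :
    Integrable fun v : ℝ => p.eval v * Real.exp (-v ^ 2) := by
  induction p using Polynomial.induction_on' with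
  | add p q hp hq =>
    simp only [Polynomial.eval_add, add_mul]
    exact hp.add hq
  | monomial n a => simpa [mul_assoc] using (int_pow_gauss n).const_mul a

lemma gauss_ibp (p : Polynomial ℝ) :
    ∫ v : ℝ, 2 * v * p.eval v * Real.exp (-v ^ 2) =
      ∫ v : ℝ, (Polynomial.derivative p).eval v * Real.exp (-v ^ 2) := by
  have i1 := int_poly_gauss (Polynomial.derivative p)
  have i2 := int_poly_gauss (2 * Polynomial.X * p)
  simp only [Polynomial.eval_mul, Polynomial.eval_ofNat, Polynomial.eval_X] at i2
  have h := integral_eq_zero_of_hasDerivAt_of_integrable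
    (f := fun v : ℝ => p.eval v * Real.exp (-v ^ 2))
    (f' := fun v : ℝ => (Polynomial.derivative p).eval v * Real.exp (-v ^ 2)
      - 2 * v * p.eval v * Real.exp (-v ^ 2))
    (fun v => by
      have h1 := p.hasDerivAt v
      have h2 : HasDerivAt (fun v : ℝ => Real.exp (-v ^ 2)) (Real.exp (-v^2) * (-(2 * v))) v := by
        have := ((hasDerivAt_pow 2 v).neg).exp
        simpa using this
      refine (h1.mul h2).congr_deriv ?_
      ring) (i1.sub i2) (int_poly_gauss p)
  rw [integral_sub i1 i2] at h
  linarith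

noncomputable def gg (c d u : ℝ) (ℓ m : ℕ) : ℝ :=
  ∫ v : ℝ, (HP ℓ).eval (c * u + d * v) * (HP m).eval (c * v - d * u) * Real.exp (-v ^ 2)

open Polynomial in
lemma gg_int (c d u : ℝ) (p q : Polynomial ℝ) :
    Integrable fun v : ℝ => p.eval (c * u + d * v) * q.eval (c * v - d * u) *
      Real.exp (-v ^ 2) := by
  have := int_poly_gauss (p.comp (C (c * u) + C d * X) * q.comp (C c * X - C (d * u)))
  simpa using this

open Polynomial in
lemma gg_ibp (c d u : ℝ) (ℓ m : ℕ) :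
    ∫ v : ℝ, 2 * v * ((HP ℓ).eval (c * u + d * v) * (HP m).eval (c * v - d * u)) *
      Real.exp (-v ^ 2) = 2 * ℓ * d * gg c d u (ℓ - 1) m + 2 * m * c * gg c d u ℓ (m - 1) := by
  have := gauss_ibp ((HP ℓ).comp (C (c * u) + C d * X) * (HP m).comp (C c * X - C (d * u)))
  simp only [eval_mul, eval_comp, eval_add, eval_sub, eval_C, eval_X, derivative_mul,
    derivative_comp, HP_deriv, derivative_add, derivative_sub, derivative_C, derivative_X,
    eval_natCast, eval_ofNat, eval_zero, eval_one] at this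
  rw [this, gg, gg, ← integral_const_mul, ← integral_const_mul, ← integral_add]
  · congr 1; ext v; ring
  · exact (gg_int ..).const_mul _
  · exact (gg_int ..).const_mul _

lemma gg_int' (c d u : ℝ) (p q : Polynomial ℝ) :
    Integrable fun v : ℝ => 2 * v * (p.eval (c * u + d * v) * q.eval (c * v - d * u)) *
      Real.exp (-v ^ 2) := by
  have := int_poly_gauss (2 * Polynomial.X * (p.comp (.C (c * u) + .C d * .X) *
    q.comp (.C c * .X - .C (d * u))))
  simpa using this

lemma gg_succ_left (c d u : ℝ) (h : c ^ 2 + d ^ 2 = 1) (ℓ m : ℕ) :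
    gg c d u (ℓ + 1) m = 2 * c * u * gg c d u ℓ m - 2 * ℓ * c ^ 2 * gg c d u (ℓ - 1) m
      + 2 * m * c * d * gg c d u ℓ (m - 1) := by
  have h1 : gg c d u (ℓ + 1) m = 2 * c * u * gg c d u ℓ m
     + d * (∫ v : ℝ, 2 * v * ((HP ℓ).eval (c * u + d * v) * (HP m).eval (c * v - d * u)) *
      Real.exp (-v ^ 2)) - 2 * ℓ * gg c d u (ℓ - 1) m := by
    simp only [gg]
    rw [← integral_const_mul, ← integral_const_mul, ← integral_const_mul, ← integral_add,
      ← integral_sub]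
    · congr 1; ext v; rw [HP_succ]; simp; ring
    · exact ((gg_int ..).const_mul _).add ((gg_int' ..).const_mul _)
    · exact (gg_int ..).const_mul _
    · exact (gg_int ..).const_mul _
    · exact (gg_int' ..).const_mul _
  rw [h1, gg_ibp]
  linear_combination 2 * ℓ * gg c d u (ℓ - 1) m * h

lemma gg_succ_right (c d u : ℝ) (h : c ^ 2 + d ^ 2 = 1) (m : ℕ) :
    gg c d u 0 (m + 1) = - 2 * d * u * gg c d u 0 m - 2 * m * d ^ 2 * gg c d u 0 (m - 1) := by
  have h1 : gg c d u 0 (m + 1) = - 2 * d * u * gg c d u 0 m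
     + c * (∫ v : ℝ, 2 * v * ((HP 0).eval (c * u + d * v) * (HP m).eval (c * v - d * u)) *
      Real.exp (-v ^ 2)) - 2 * m * gg c d u 0 (m - 1) := by
    simp only [gg]
    rw [← integral_const_mul, ← integral_const_mul, ← integral_const_mul, ← integral_add,
      ← integral_sub]
    · congr 1; ext v; rw [HP_succ m]; simp; ring
    · exact ((gg_int ..).const_mul _).add ((gg_int' ..).const_mul _)
    · exact (gg_int ..).const_mul _
    · exact (gg_int ..).const_mul _
    · exact (gg_int' ..).const_mul _
  rw [h1, gg_ibp]
  push_cast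
  linear_combination 2 * m * gg c d u 0 (m - 1) * h

lemma gg_zero (c d u : ℝ) (h : c ^ 2 + d ^ 2 = 1) (m : ℕ) :
    gg c d u 0 m = √Real.pi * (-d) ^ m * (HP m).eval u := by
  induction m using Nat.strong_induction_on with
  | _ m ih =>
    match m with
    | 0 =>
      have := integral_gaussian 1
      simp [gg, HP] at this ⊢
      exact this
    | (k + 1) =>
      rw [gg_succ_right _ _ _ h, ih k (by omega), HP_succ]
      rcases k with _ | k
      · simp; ring
      · rw [ih (k + 1 - 1) (by omega)]; simp; ring

lemma gg_eq (c d u : ℝ) (h : c ^ 2 + d ^ 2 = 1) (ℓ : ℕ) : ∀ m : ℕ,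
    gg c d u ℓ m = √Real.pi * c ^ ℓ * (-d) ^ m * (HP (ℓ + m)).eval u := by
  induction ℓ using Nat.strong_induction_on with
  | _ ℓ ih =>
    intro m
    match ℓ with
    | 0 => rw [gg_zero _ _ _ h]; simp
    | (k + 1) =>
      rw [gg_succ_left _ _ _ h, ih k (by omega), ih k (by omega),
        show k + 1 + m = (k + m) + 1 by omega, HP_succ]
      rcases k with _ | k <;> rcases m with _ | m
      · simp; ring
      · simp; ring
      · rw [ih (k + 1 - 1) (by omega)]; simp; ring
      · rw [ih (k + 1 - 1) (by omega)]
        simp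
        rw [show k + 1 + m = k + (m + 1) by omega]
        ring
noncomputable def ww (ν : ℂ) (u : ℝ) : ℂ := ((|u| : ℝ) : ℂ) ^ (2 * ν) * (Real.exp (-u ^ 2) : ℂ)

lemma ww_int (ν : ℂ) (hν : 0 < ν.re) (k : ℕ) : Integrable fun u : ℝ => ww ν u * (u : ℂ) ^ k := by
  obtain ⟨K, hK⟩ := exists_nat_ge (2 * ν.re)
  refine Integrable.mono' ((int_pow_gauss k).norm.add (int_pow_gauss (K + k)).norm) ?_ ?_
  · apply Measurable.aestronglyMeasurable
    unfold ww
    fun_prop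
  · refine Filter.Eventually.of_forall fun u => ?_
    have h1 : ‖((|u| : ℝ) : ℂ) ^ (2 * ν)‖ ≤ 1 + |u| ^ K := by
      rw [Complex.norm_cpow_eq_rpow_re_of_nonneg (abs_nonneg u) (by simp; exact hν.ne')]
      have : (2 * ν).re = 2 * ν.re := by simp
      rw [this]
      rcases le_total |u| 1 with h | h
      · have := Real.rpow_le_one (abs_nonneg u) h (by positivity : 0 ≤ 2 * ν.re)
        have := pow_nonneg (abs_nonneg u) K
        linarith
      · have := Real.rpow_le_rpow_of_exponent_le h hK
        rw [Real.rpow_natCast] at this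
        linarith
    have e1 : ‖ww ν u * (u : ℂ) ^ k‖ =
        ‖((|u| : ℝ) : ℂ) ^ (2 * ν)‖ * (|u| ^ k * Real.exp (-u ^ 2)) := by
      rw [ww, norm_mul, norm_mul, norm_pow, Complex.norm_real, Complex.norm_real,
        Real.norm_of_nonneg (Real.exp_pos _).le, Real.norm_eq_abs]
      ring
    rw [e1]
    have e2 : ((fun a : ℝ => ‖a ^ k * Real.exp (-a ^ 2)‖) + fun a : ℝ =>
        ‖a ^ (K + k) * Real.exp (-a ^ 2)‖) u = (1 + |u| ^ K) * (|u| ^ k * Real.exp (-u ^ 2)) := by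
      simp only [Pi.add_apply, norm_mul, norm_pow, Real.norm_eq_abs, Real.abs_exp]
      ring
    refine le_trans ?_ e2.ge
    gcongr

lemma ww_neg (ν : ℂ) (u : ℝ) : ww ν (-u) = ww ν u := by simp [ww]

lemma ww_half (ν : ℂ) (hν : 0 < ν.re) :
    ∫ u in Set.Ioi (0 : ℝ), ww ν u = (1 / 2 : ℂ) * Complex.Gamma (1 / 2 + ν) := by
  have h := mellin_comp_rpow (fun x : ℝ => ((Real.exp (-x) : ℝ) : ℂ)) (2 * ν + 1) 2
  rw [← Complex.GammaIntegral_eq_mellin] at h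
  rw [show (2 * ν + 1) / ((2 : ℝ) : ℂ) = 1 / 2 + ν by push_cast; ring,
    ← Complex.Gamma_eq_integral (by simp; linarith)] at h
  have e : ∫ u in Set.Ioi (0 : ℝ), ww ν u =
      mellin (fun t : ℝ => ((Real.exp (-(t ^ (2 : ℝ))) : ℝ) : ℂ)) (2 * ν + 1) := by
    rw [mellin]
    refine setIntegral_congr_fun measurableSet_Ioi fun u hu => ?_
    simp only [ww, smul_eq_mul, abs_of_pos (Set.mem_Ioi.mp hu)]
    rw [add_sub_cancel_right]
    simp
  rw [e, h]
  simp

lemma ww_full (ν : ℂ) (hν : 0 < ν.re) :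
    ∫ u : ℝ, ww ν u = Complex.Gamma (1 / 2 + ν) := by
  have hi : Integrable (ww ν) := by simpa using ww_int ν hν 0
  rw [← intervalIntegral.integral_Iic_add_Ioi (b := 0) hi.integrableOn hi.integrableOn]
  have := integral_comp_neg_Ioi 0 (ww ν)
  simp only [ww_neg, neg_zero] at this
  rw [← this, ww_half ν hν]
  ring

lemma ww_even (ν : ℂ) (hν : 0 < ν.re) (k : ℕ) :
    ∫ u : ℝ, ww ν u * (u : ℂ) ^ (2 * k) = Complex.Gamma (1 / 2 + ν + k) := by
  rw [add_assoc, ← ww_full (ν + k) (by simp; positivity)]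
  congr 1
  ext u
  have hν0 : ν ≠ 0 := by rintro rfl; simp at hν
  have hν1 : ν + k ≠ 0 := by
    intro h
    have := congrArg Complex.re h
    simp at this
    have h2 : (0 : ℝ) ≤ k := Nat.cast_nonneg k
    linarith
  rcases eq_or_ne u 0 with rfl | hu
  · simp [ww, hν0, hν1]
  · have hu' : ((|u| : ℝ) : ℂ) ≠ 0 := by simpa using hu
    have : (u : ℂ) ^ (2 * k) = ((|u| : ℝ) : ℂ) ^ (2 * (k : ℂ)) := by
      rw [show (2 * (k : ℂ)) = ((2 * k : ℕ) : ℂ) by push_cast; ring, Complex.cpow_natCast,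
        pow_mul, pow_mul]
      congr 1
      norm_cast
      rw [sq_abs]
    rw [this, ww, ww, mul_add, Complex.cpow_add _ _ hu']
    ring

lemma ww_odd (ν : ℂ) (k : ℕ) : ∫ u : ℝ, ww ν u * (u : ℂ) ^ (2 * k + 1) = 0 := by
  have h := integral_neg_eq_self (fun u : ℝ => ww ν u * (u : ℂ) ^ (2 * k + 1)) volume
  simp only [ww_neg, Complex.ofReal_neg, Odd.neg_pow ⟨k, rfl⟩, mul_neg, integral_neg] at h
  exact self_eq_neg.mp h.symm

lemma ww_polyint (ν : ℂ) (hν : 0 < ν.re) (p : Polynomial ℝ) :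
    Integrable fun u : ℝ => ww ν u * ((p.eval u : ℝ) : ℂ) := by
  induction p using Polynomial.induction_on' with
  | add p q hp hq =>
    simp only [Polynomial.eval_add, Complex.ofReal_add, mul_add]
    exact hp.add hq
  | monomial n a =>
    have := (ww_int ν hν n).const_mul (a : ℂ)
    refine this.congr (Filter.Eventually.of_forall fun u => ?_)
    simp
    ring

noncomputable def LL (ν : ℂ) (p : Polynomial ℝ) : ℂ := ∫ u : ℝ, ww ν u * ((p.eval u : ℝ) : ℂ)

lemma LL_add (ν : ℂ) (hν : 0 < ν.re) (p q : Polynomial ℝ) : LL ν (p + q) = LL ν p + LL ν q := by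
  unfold LL
  rw [← integral_add (ww_polyint ν hν p) (ww_polyint ν hν q)]
  congr 1; ext u; simp; ring

lemma LL_C (ν : ℂ) (a : ℝ) (p : Polynomial ℝ) : LL ν (.C a * p) = a * LL ν p := by
  unfold LL
  rw [← integral_const_mul]
  congr 1; ext u; simp; ring

lemma LL_mono (ν : ℂ) (hν : 0 < ν.re) (n : ℕ) :
    2 * LL ν (.X ^ (n + 2)) = (2 * ν + 1 + n) * LL ν (.X ^ n) := by
  simp only [LL, Polynomial.eval_pow, Polynomial.eval_X, Complex.ofReal_pow]
  rcases Nat.even_or_odd' n with ⟨k, rfl | rfl⟩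
  · rw [show 2 * k + 2 = 2 * (k + 1) by ring, ww_even ν hν, ww_even ν hν]
    have : (1 / 2 + ν + k : ℂ) ≠ 0 := by
      intro h
      have := congrArg Complex.re h
      simp at this
      have h2 : (0 : ℝ) ≤ k := Nat.cast_nonneg k
      linarith
    push_cast
    rw [← add_assoc, Complex.Gamma_add_one _ this]
    ring
  · rw [show 2 * k + 1 + 2 = 2 * (k + 1) + 1 by ring, ww_odd, ww_odd]; simp

lemma LL_rec (ν : ℂ) (hν : 0 < ν.re) (p : Polynomial ℝ) :
    2 * LL ν (.X ^ 2 * p) = (2 * ν + 1) * LL ν p + LL ν (.X * Polynomial.derivative p) := by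
  induction p using Polynomial.induction_on' with
  | add p q hp hq =>
    rw [Polynomial.derivative_add, mul_add, mul_add, LL_add _ hν, LL_add _ hν, LL_add _ hν]
    linear_combination hp + hq
  | monomial n a =>
    have e1 : (.X ^ 2 * Polynomial.monomial n a : Polynomial ℝ) = .C a * .X ^ (n + 2) := by
      rw [← Polynomial.C_mul_X_pow_eq_monomial]; ring
    have e2 : (.X * Polynomial.derivative (Polynomial.monomial n a) : Polynomial ℝ)
        = .C (a * n) * .X ^ n := by
      rw [Polynomial.derivative_monomial, ← Polynomial.C_mul_X_pow_eq_monomial]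
      rcases n with _ | n
      · simp
      · simp; ring
    rw [e1, e2, ← Polynomial.C_mul_X_pow_eq_monomial, LL_C, LL_C, LL_C]
    push_cast
    linear_combination (a : ℂ) * LL_mono ν hν n

lemma LL_HP (ν : ℂ) (hν : 0 < ν.re) (n : ℕ) : LL ν (HP (2 * n)) =
    (ascPochhammer ℂ n).eval (-ν) * (-4) ^ n * Complex.Gamma (1 / 2 + ν) := by
  induction n with
  | zero =>
    have := ww_full ν hν
    simpa [LL, HP] using this
  | succ n ih =>
    have e : HP (2 * (n + 1)) = .C 4 * (.X ^ 2 * HP (2 * n)) +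
        (.C (-2) * (.X * Polynomial.derivative (HP (2 * n))) + .C (-(2 + 4 * n)) * HP (2 * n)) := by
      rw [show 2 * (n + 1) = 2 * n + 2 by ring, HP, HP_succ, HP_deriv]
      simp only [Polynomial.C_neg, Polynomial.C_add, Polynomial.C_mul,
        map_natCast, map_ofNat]
      push_cast
      ring
    rw [e, LL_add _ hν, LL_add _ hν, LL_C, LL_C, LL_C, ascPochhammer_succ_right]
    simp only [Polynomial.eval_mul, Polynomial.eval_add, Polynomial.eval_X,
      Polynomial.eval_natCast]
    have h := LL_rec ν hν (HP (2 * n))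
    push_cast
    rw [pow_succ (-4 : ℂ)]
    linear_combination 2 * h + 4 * (ν - n) * ih

def QQ (ν : ℂ) (f : ℝ × ℝ → ℝ) : Prop := ∀ i j : ℕ, Integrable (fun z : ℝ × ℝ =>
  (ww ν z.1 * (z.1 : ℂ) ^ i) * ((z.2 ^ j * Real.exp (-z.2 ^ 2) : ℝ) : ℂ) * (f z : ℂ))

lemma QQ_one (ν : ℂ) (hν : 0 < ν.re) : QQ ν (fun _ => 1) := by
  intro i j
  have := (ww_int ν hν i).mul_prod ((int_pow_gauss j).ofReal (𝕜 := ℂ))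
  refine this.congr (Filter.Eventually.of_forall fun z => ?_)
  simp

lemma QQ_add (ν : ℂ) {f g : ℝ × ℝ → ℝ} (hf : QQ ν f) (hg : QQ ν g) :
    QQ ν (fun z => f z + g z) := by
  intro i j
  refine ((hf i j).add (hg i j)).congr (Filter.Eventually.of_forall fun z => ?_)
  simp
  ring

lemma QQ_C (ν : ℂ) {f : ℝ × ℝ → ℝ} (a : ℝ) (hf : QQ ν f) :
    QQ ν (fun z => a * f z) := by
  intro i j
  refine ((hf i j).const_mul (a : ℂ)).congr (Filter.Eventually.of_forall fun z => ?_)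
  simp
  ring

lemma QQ_lin (ν : ℂ) {f : ℝ × ℝ → ℝ} (a b : ℝ) (hf : QQ ν f) :
    QQ ν (fun z => (a * z.1 + b * z.2) * f z) := by
  intro i j
  refine (((hf (i + 1) j).const_mul (a : ℂ)).add ((hf i (j + 1)).const_mul (b : ℂ))).congr
    (Filter.Eventually.of_forall fun z => ?_)
  simp
  ring

lemma QQ_pow (ν : ℂ) {f : ℝ × ℝ → ℝ} (a b : ℝ) (hf : QQ ν f) (n : ℕ) :
    QQ ν (fun z => (a * z.1 + b * z.2) ^ n * f z) := by
  induction n with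
  | zero => simpa using hf
  | succ n ih =>
    have := QQ_lin ν a b ih
    simpa only [← mul_assoc, ← pow_succ'] using this

lemma QQ_poly (ν : ℂ) {f : ℝ × ℝ → ℝ} (a b : ℝ) (hf : QQ ν f) (p : Polynomial ℝ) :
    QQ ν (fun z => p.eval (a * z.1 + b * z.2) * f z) := by
  induction p using Polynomial.induction_on' with
  | add p q hp hq => simpa only [Polynomial.eval_add, add_mul] using QQ_add ν hp hq
  | monomial n r =>
    simpa only [Polynomial.eval_monomial, mul_assoc] using QQ_C ν r (QQ_pow ν a b hf n)

lemma int_rot (ν : ℂ) (hν : 0 < ν.re) (c d : ℝ) (p q : Polynomial ℝ) :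
    Integrable (fun z : ℝ × ℝ => ww ν z.1 * ((p.eval (c * z.1 + d * z.2) *
      q.eval (c * z.2 - d * z.1) * Real.exp (-z.2 ^ 2) : ℝ) : ℂ)) := by
  have := QQ_poly ν c d (QQ_poly ν (-d) c (QQ_one ν hν) q) p 0 0
  refine this.congr (Filter.Eventually.of_forall fun z => ?_)
  simp only [show -d * z.1 + c * z.2 = c * z.2 - d * z.1 by ring]
  push_cast
  ring

/-- The rotation. -/
noncomputable def rotE (c d : ℝ) (h : c ^ 2 + d ^ 2 = 1) : (ℝ × ℝ) ≃ᵐ (ℝ × ℝ) where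
  toFun z := (c * z.1 + d * z.2, c * z.2 - d * z.1)
  invFun z := (c * z.1 - d * z.2, d * z.1 + c * z.2)
  left_inv z := by
    ext
    · simp only; linear_combination z.1 * h
    · simp only; linear_combination z.2 * h
  right_inv z := by
    ext
    · simp only; linear_combination z.1 * h
    · simp only; linear_combination z.2 * h
  measurable_toFun := by simp only [Equiv.coe_fn_mk]; fun_prop
  measurable_invFun := by simp only [Equiv.coe_fn_symm_mk]; fun_prop

lemma rotE_mp (c d : ℝ) (h : c ^ 2 + d ^ 2 = 1) :
    MeasurePreserving (rotE c d h) volume volume := by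
  refine ⟨(rotE c d h).measurable, ?_⟩
  have hd : LinearMap.det (Matrix.toLin (Module.Basis.finTwoProd ℝ) (Module.Basis.finTwoProd ℝ)
      !![c, d; -d, c]) = 1 := by
    rw [LinearMap.det_toLin, Matrix.det_fin_two_of]
    linear_combination h
  have := Measure.map_linearMap_addHaar_eq_smul_addHaar (volume : Measure (ℝ × ℝ))
    (f := Matrix.toLin (Module.Basis.finTwoProd ℝ) (Module.Basis.finTwoProd ℝ)
      !![c, d; -d, c]) (by rw [hd]; exact one_ne_zero)
  rw [hd] at this
  simp only [inv_one, abs_one, ENNReal.ofReal_one, one_smul] at this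
  rw [← this]
  congr 1
  ext z
  · rw [Matrix.toLin_finTwoProd_apply]; simp [rotE]
  · rw [Matrix.toLin_finTwoProd_apply]; simp [rotE]; ring

lemma main_rot (ν : ℂ) (hν : 0 < ν.re) (c d : ℝ) (h : c ^ 2 + d ^ 2 = 1) (ℓ m : ℕ) :
    ∫ z : ℝ × ℝ, ww ν z.1 * (((HP ℓ).eval (c * z.1 + d * z.2) *
      (HP m).eval (c * z.2 - d * z.1) * Real.exp (-z.2 ^ 2) : ℝ) : ℂ) =
    ((√Real.pi * c ^ ℓ * (-d) ^ m : ℝ) : ℂ) * LL ν (HP (ℓ + m)) := by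
  rw [Measure.volume_eq_prod, integral_prod _ (int_rot ν hν c d _ _), LL, ← integral_const_mul]
  congr 1
  ext u
  have := gg_eq c d u h ℓ m
  rw [gg] at this
  dsimp only
  rw [integral_const_mul, integral_complex_ofReal, this]
  push_cast
  ring

theorem stmt12 (ℓ m : ℕ) (hpar : Even (ℓ + m)) (ν : ℂ) (hν : 0 < ν.re) (x : ℝ)
    (hx : -1 ≤ x) (hx' : x ≤ 1) :
    (∫ s : ℝ, ∫ t : ℝ,
        ((|s - x * t| : ℝ) : ℂ) ^ (2 * ν) * (Real.exp (-s ^ 2 - t ^ 2) : ℂ) *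
          (physHermite ℓ s : ℂ) * (physHermite m t : ℂ)) =
      (ascPochhammer ℂ ((ℓ + m) / 2)).eval (-ν) * (-1 : ℂ) ^ (((ℓ : ℤ) - (m : ℤ)) / 2) *
        (2 : ℂ) ^ (ℓ + m) * (Real.sqrt Real.pi : ℂ) * Complex.Gamma (1 / 2 + ν) *
        ((x ^ 2 + 1 : ℝ) : ℂ) ^ (ν - ((ℓ : ℂ) + (m : ℂ)) / 2) * (x : ℂ) ^ m := by
  obtain ⟨r, hr, hr2⟩ : ∃ r : ℝ, 0 < r ∧ r ^ 2 = x ^ 2 + 1 :=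
    ⟨√(x ^ 2 + 1), by positivity, Real.sq_sqrt (by positivity)⟩
  have hcd : r⁻¹ ^ 2 + (x * r⁻¹) ^ 2 = 1 := by
    field_simp
    linarith
  set F : ℝ × ℝ → ℂ := fun z => ((|z.1 - x * z.2| : ℝ) : ℂ) ^ (2 * ν) *
    (Real.exp (-z.1 ^ 2 - z.2 ^ 2) : ℂ) * (physHermite ℓ z.1 : ℂ) * (physHermite m z.2 : ℂ) with hF
  have hrot : ∀ z : ℝ × ℝ, F (rotE r⁻¹ (x * r⁻¹) hcd z) = (r : ℂ) ^ (2 * ν) *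
      (ww ν z.1 * (((HP ℓ).eval (r⁻¹ * z.1 + x * r⁻¹ * z.2) *
      (HP m).eval (r⁻¹ * z.2 - x * r⁻¹ * z.1) * Real.exp (-z.2 ^ 2) : ℝ) : ℂ)) := by
    intro z
    have e1 : (rotE r⁻¹ (x * r⁻¹) hcd z).1 = r⁻¹ * z.1 + x * r⁻¹ * z.2 := rfl
    have e2 : (rotE r⁻¹ (x * r⁻¹) hcd z).2 = r⁻¹ * z.2 - x * r⁻¹ * z.1 := rfl
    have e3 : (r⁻¹ * z.1 + x * r⁻¹ * z.2) - x * (r⁻¹ * z.2 - x * r⁻¹ * z.1) = r * z.1 := by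
      field_simp
      linear_combination -z.1 * hr2
    have e4 : -(r⁻¹ * z.1 + x * r⁻¹ * z.2) ^ 2 - (r⁻¹ * z.2 - x * r⁻¹ * z.1) ^ 2
        = -z.1 ^ 2 + -z.2 ^ 2 := by
      linear_combination (-z.1 ^ 2 - z.2 ^ 2) * hcd
    simp only [hF]
    rw [e1, e2, e3, e4, Real.exp_add, physHermite_eq, physHermite_eq, abs_mul, abs_of_pos hr, ww,
      Complex.ofReal_mul r, Complex.mul_cpow_ofReal_nonneg hr.le (abs_nonneg _)]
    push_cast
    ring
  have hFi : Integrable F := by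
    rw [← (rotE_mp _ _ hcd).integrable_comp_emb (rotE _ _ hcd).measurableEmbedding]
    refine ((int_rot ν hν r⁻¹ (x * r⁻¹) (HP ℓ) (HP m)).const_mul ((r : ℂ) ^ (2 * ν))).congr
      (Filter.Eventually.of_forall fun z => ?_)
    exact (hrot z).symm
  have hI : (∫ s : ℝ, ∫ t : ℝ, F (s, t)) = ∫ z : ℝ × ℝ, F z := by
    rw [Measure.volume_eq_prod, integral_prod F hFi]
  rw [hI, ← (rotE_mp _ _ hcd).integral_comp' F]
  simp_rw [hrot]
  rw [integral_const_mul, main_rot ν hν _ _ hcd]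
  obtain ⟨n, hn⟩ := hpar
  have hn2 : ℓ + m = 2 * n := by omega
  rw [hn2, LL_HP ν hν, Nat.mul_div_cancel_left n two_pos]
  have hrc : (r : ℂ) ≠ 0 := by exact_mod_cast hr.ne'
  have hA : ((x ^ 2 + 1 : ℝ) : ℂ) ^ (ν - ((ℓ : ℂ) + (m : ℂ)) / 2) =
      (r : ℂ) ^ (2 * ν) * ((r : ℂ)⁻¹) ^ (ℓ + m) := by
    rw [show ((ℓ : ℂ) + m) / 2 = (n : ℂ) by
      rw [← Nat.cast_add, hn2]; push_cast; ring]
    rw [← hr2, sq, Complex.ofReal_mul, Complex.mul_cpow_ofReal_nonneg hr.le hr.le,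
      ← Complex.cpow_add _ _ hrc, ← two_mul, mul_sub, Complex.cpow_sub _ _ hrc,
      show 2 * (n : ℂ) = ((2 * n : ℕ) : ℂ) by push_cast; ring, Complex.cpow_natCast, hn2,
      inv_pow, div_eq_mul_inv]
  have hS : (-1 : ℂ) ^ (((ℓ : ℤ) - (m : ℤ)) / 2) = (-1) ^ n * (-1) ^ m := by
    have : ((ℓ : ℤ) - (m : ℤ)) / 2 = (n : ℤ) - m := by omega
    rw [this, zpow_sub₀ (by norm_num), zpow_natCast, zpow_natCast, div_eq_mul_inv, ← inv_pow]
    norm_num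
  rw [hA, hS, pow_mul, show (-4 : ℂ) = (-1) * 2 ^ 2 by norm_num, mul_pow (-1 : ℂ)]
  push_cast
  rw [neg_pow ((x : ℂ) * _), mul_pow, pow_add]
  ring
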